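/- Let G : ℓ^m → ℓ^r be strictly causal and let M : ℓ^r × ℓ^m → ℓ^m be causal–strictly-causal. For every (v,d) ∈ ℓ^r × ℓ^m, the pair of equations β = v + G(d − δ) − G(0) and δ = −M(β, δ) has a unique solution (β,δ) ∈ ℓ^r × ℓ^m. Define Ψ^u(v,d) := d − δ and Ψ^y(v,d) := G(Ψ^u(v,d)) + v. Then the map (Ψ^y, Ψ^u) is an achievable closed-loop map of G: there exists a causal controller K : ℓ^r → ℓ^m such that the closed-loop map Φ_{G,K} equals (Ψ^y, Ψ^u). -/

import Mathlib

/-- Sequences with values in `ℝ^n` (with the Euclidean norm). -/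
abbrev Traj (n : ℕ) : Type := ℕ → EuclideanSpace ℝ (Fin n)

/-- A causal operator on sequences. -/
def Causal {n m : ℕ} (A : Traj n → Traj m) : Prop :=
  ∀ (x x' : Traj n) (t : ℕ), (∀ s, s ≤ t → x s = x' s) → A x t = A x' t

/-- A strictly causal operator on sequences. -/
def StrictlyCausal {n m : ℕ} (A : Traj n → Traj m) : Prop :=
  ∀ (x x' : Traj n) (t : ℕ), (∀ s, s < t → x s = x' s) → A x t = A x' t

/-- Causal in the first argument, strictly causal in the second argument. -/
def CausalSC {n q m : ℕ} (B : Traj n → Traj q → Traj m) : Prop :=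
  ∀ (x x' : Traj n) (z z' : Traj q) (t : ℕ),
    (∀ s, s ≤ t → x s = x' s) → (∀ s, s < t → z s = z' s) → B x z t = B x' z' t

/-- Causal in both arguments. -/
def CausalCC {n q m : ℕ} (B : Traj n → Traj q → Traj m) : Prop :=
  ∀ (x x' : Traj n) (z z' : Traj q) (t : ℕ),
    (∀ s, s ≤ t → x s = x' s) → (∀ s, s ≤ t → z s = z' s) → B x z t = B x' z' t

/-- Strictly causal in both arguments. -/
def CausalSS {n q m : ℕ} (B : Traj n → Traj q → Traj m) : Prop :=
  ∀ (x x' : Traj n) (z z' : Traj q) (t : ℕ),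
    (∀ s, s < t → x s = x' s) → (∀ s, s < t → z s = z' s) → B x z t = B x' z' t

/-- Membership in `ℓ_p`: summability of `‖x t‖ ^ p`. -/
def InLp (p : ℝ) {E : Type*} [Norm E] (x : ℕ → E) : Prop :=
  Summable fun t => ‖x t‖ ^ p

/-- The `ℓ_p` norm `(∑ₜ ‖x t‖ ^ p) ^ (1/p)` of a sequence. -/
noncomputable def lpSeqNorm (p : ℝ) {E : Type*} [Norm E] (x : ℕ → E) : ℝ :=
  (∑' t, ‖x t‖ ^ p) ^ (1 / p)

/-- The `ℝ^{r+m}`-valued sequence obtained by stacking `v` and `d`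
(the norm of `(v t, d t)` is the Euclidean norm of the concatenated vector). -/
noncomputable def pairSeq {r m : ℕ} (v : Traj r) (d : Traj m) :
    ℕ → WithLp 2 (EuclideanSpace ℝ (Fin r) × EuclideanSpace ℝ (Fin m)) :=
  fun t => (WithLp.equiv 2 _).symm (v t, d t)

/-- An exponentially decaying sequence: `‖x t‖ ≤ k · α ^ t` with `k > 0`, `α ∈ (0,1)`. -/
def ExpDecay {E : Type*} [Norm E] (x : ℕ → E) : Prop :=
  ∃ k : ℝ, 0 < k ∧ ∃ α : ℝ, 0 < α ∧ α < 1 ∧ ∀ t, ‖x t‖ ≤ k * α ^ t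

/-!
Each equation `z = A z` with `A` strictly causal over a well-founded time set has exactly one
solution, built by recursion on time. This solves the equations for `(β, δ)`, and it also solves
`δ = -M(β, δ)` for `δ` alone when `β` is given, by a causal operator `δ = D β`. Substituting
`β = y - G 0` and `δ = d - u` turns the closed-loop equations of the controller
`K y = -D (y - G 0)` into the equations for `(β, δ)`.
-/

section CausalOperators

variable {ι E F H : Type*} [Preorder ι]

/-- Causality (`Causal`) for signals over a preordered time set, with values in any types. -/
def IsCausal (A : (ι → E) → ι → F) : Prop :=
  ∀ ⦃x x' : ι → E⦄ ⦃t : ι⦄, (∀ s ≤ t, x s = x' s) → A x t = A x' t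

/-- Strict causality (`StrictlyCausal`) for signals over a preordered time set, with values in any
types. -/
def IsStrictlyCausal (A : (ι → E) → ι → F) : Prop :=
  ∀ ⦃x x' : ι → E⦄ ⦃t : ι⦄, (∀ s < t, x s = x' s) → A x t = A x' t

/-- The causal–strictly-causal property (`CausalSC`) for signals over a preordered time set, with
values in any types. -/
def IsCausalStrictlyCausal (B : (ι → F) → (ι → E) → ι → H) : Prop :=
  ∀ ⦃x x' : ι → F⦄ ⦃z z' : ι → E⦄ ⦃t : ι⦄,
    (∀ s ≤ t, x s = x' s) → (∀ s < t, z s = z' s) → B x z t = B x' z' t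

theorem IsCausalStrictlyCausal.neg [Neg H] {B : (ι → F) → (ι → E) → ι → H}
    (hB : IsCausalStrictlyCausal B) : IsCausalStrictlyCausal fun x z => -B x z :=
  fun _ _ _ _ _ hx hz => congrArg Neg.neg (hB hx hz)

theorem IsCausalStrictlyCausal.isStrictlyCausal {B : (ι → F) → (ι → E) → ι → H}
    (hB : IsCausalStrictlyCausal B) (x : ι → F) : IsStrictlyCausal (B x) :=
  fun _ _ _ hz => hB (fun _ _ => rfl) hz

theorem IsCausalStrictlyCausal.isStrictlyCausal_comp {B : (ι → F) → (ι → E) → ι → H}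
    {A : (ι → E) → ι → F} (hB : IsCausalStrictlyCausal B) (hA : IsStrictlyCausal A) :
    IsStrictlyCausal fun z => B (A z) z :=
  fun _ _ _ hz => hB (fun _ hs => hA fun q hq => hz q (hq.trans_le hs)) hz

theorem IsCausal.neg_comp_sub_const [Neg H] [Sub F] {D : (ι → F) → ι → H} (hD : IsCausal D)
    (c : ι → F) : IsCausal fun y => -D (y - c) :=
  fun _ _ _ hy => congrArg Neg.neg (hD fun s hs => congrArg (· - c s) (hy s hs))

theorem IsStrictlyCausal.comp_const_sub [Sub E] {A : (ι → E) → ι → F} (hA : IsStrictlyCausal A)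
    (c : ι → E) : IsStrictlyCausal fun x => A (c - x) :=
  fun _ _ _ hx => hA fun s hs => congrArg (c s - ·) (hx s hs)

theorem IsStrictlyCausal.const_add_sub_const [Add F] [Sub F] {A : (ι → E) → ι → F}
    (hA : IsStrictlyCausal A) (b c : ι → F) : IsStrictlyCausal fun x => b + A x - c :=
  fun _ _ t hx => congrArg (b t + · - c t) (hA hx)

variable [WellFoundedLT ι]

theorem IsStrictlyCausal.fixedPoint_unique {A : (ι → E) → ι → E} (hA : IsStrictlyCausal A)
    {z z' : ι → E} (hz : z = A z) (hz' : z' = A z') : z = z' := by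
  funext t
  induction t using WellFoundedLT.induction with
  | ind t ih =>
    rw [hz, hz']
    exact hA ih

theorem IsStrictlyCausal.exists_fixedPoint [Nonempty E] {A : (ι → E) → ι → E}
    (hA : IsStrictlyCausal A) : ∃ z, z = A z := by
  classical
  let extend (t : ι) (past : ∀ s < t, E) (s : ι) : E :=
    if hs : s < t then past s hs else Classical.arbitrary E
  let z : ι → E := WellFoundedLT.fix fun t past => A (extend t past) t
  refine ⟨z, funext fun t => ?_⟩
  calc z t = A (extend t fun s _ => z s) t := WellFoundedLT.fix_eq _ t
    _ = A z t := hA fun _ hs => dif_pos hs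

theorem IsCausalStrictlyCausal.fixedPoint_congr {B : (ι → F) → (ι → E) → ι → E}
    (hB : IsCausalStrictlyCausal B) {x x' : ι → F} {z z' : ι → E}
    (hz : z = B x z) (hz' : z' = B x' z') {t : ι} (hx : ∀ s ≤ t, x s = x' s) : z t = z' t := by
  induction t using WellFoundedLT.induction with
  | ind t ih =>
    rw [hz, hz']
    exact hB hx fun s hs => ih s hs fun q hq => hx q (hq.trans hs.le)

theorem IsCausalStrictlyCausal.exists_isCausal_eq_iff [Nonempty E]
    {B : (ι → F) → (ι → E) → ι → E} (hB : IsCausalStrictlyCausal B) :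
    ∃ D : (ι → F) → ι → E, IsCausal D ∧ ∀ x z, z = B x z ↔ z = D x := by
  choose D hD using fun x => (hB.isStrictlyCausal x).exists_fixedPoint
  refine ⟨D, fun x x' _ hx => hB.fixedPoint_congr (hD x) (hD x') hx, fun x z => ⟨fun hz => ?_, ?_⟩⟩
  · exact (hB.isStrictlyCausal x).fixedPoint_unique hz (hD x)
  · rintro rfl
    exact hD x

end CausalOperators

section ClosedLoop

variable {ι E F : Type*} [AddCommGroup E] [AddCommGroup F]

/-- `(y, u)` is a response to `(v, d)` of the closed loop of the plant `G` and the controller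
`K`. -/
def IsClosedLoopResponse (G : (ι → E) → ι → F) (K : (ι → F) → ι → E)
    (v : ι → F) (d : ι → E) (y : ι → F) (u : ι → E) : Prop :=
  y = G u + v ∧ u = K y + d

/-- `(β, δ)` solves the equations by which the parameter `M` generates a closed-loop map of the
plant `G`. -/
def IsParameterSolution (G : (ι → E) → ι → F) (M : (ι → F) → (ι → E) → ι → E)
    (v : ι → F) (d : ι → E) (β : ι → F) (δ : ι → E) : Prop :=
  β = v + G (d - δ) - G 0 ∧ δ = -(M β δ)

variable {G : (ι → E) → ι → F} {M : (ι → F) → (ι → E) → ι → E}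

theorem isClosedLoopResponse_iff_isParameterSolution {D : (ι → F) → ι → E}
    (hD : ∀ β δ, δ = -(M β δ) ↔ δ = D β) {v : ι → F} {d : ι → E} {y : ι → F} {u : ι → E} :
    IsClosedLoopResponse G (fun y => -D (y - G 0)) v d y u ↔
      IsParameterSolution G M v d (y - G 0) (d - u) := by
  have output_iff : y = G u + v ↔ y - G 0 = v + G (d - (d - u)) - G 0 := by
    rw [sub_sub_cancel, sub_left_inj, add_comm]
  have input_iff : u = -D (y - G 0) + d ↔ d - u = D (y - G 0) := by
    rw [neg_add_eq_sub, eq_sub_iff_add_eq, sub_eq_iff_eq_add', eq_comm]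
  exact and_congr output_iff (input_iff.trans (hD _ _).symm)

variable [Preorder ι] [WellFoundedLT ι]

theorem existsUnique_isParameterSolution (hG : IsStrictlyCausal G)
    (hM : IsCausalStrictlyCausal M) (v : ι → F) (d : ι → E) :
    ∃! βδ : (ι → F) × (ι → E), IsParameterSolution G M v d βδ.1 βδ.2 := by
  have feedback : IsStrictlyCausal fun δ => -(M (v + G (d - δ) - G 0) δ) :=
    hM.neg.isStrictlyCausal_comp ((hG.comp_const_sub d).const_add_sub_const v (G 0))
  obtain ⟨δ, hδ⟩ := feedback.exists_fixedPoint
  refine ⟨(v + G (d - δ) - G 0, δ), ⟨rfl, hδ⟩, ?_⟩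
  rintro ⟨β', δ'⟩ ⟨hβ' : β' = v + G (d - δ') - G 0, hδ' : δ' = -(M β' δ')⟩
  subst hβ'
  obtain rfl : δ' = δ := feedback.fixedPoint_unique hδ' hδ
  rfl

theorem exists_isCausal_isClosedLoopResponse_iff (G : (ι → E) → ι → F)
    (hM : IsCausalStrictlyCausal M) :
    ∃ K : (ι → F) → ι → E, IsCausal K ∧ ∀ v d y u,
      IsClosedLoopResponse G K v d y u ↔ IsParameterSolution G M v d (y - G 0) (d - u) := by
  obtain ⟨D, hD_causal, hD⟩ := hM.neg.exists_isCausal_eq_iff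
  exact ⟨fun y => -D (y - G 0), hD_causal.neg_comp_sub_const (G 0),
    fun _ _ _ _ => isClosedLoopResponse_iff_isParameterSolution hD⟩

theorem statement5_general (hG : IsStrictlyCausal G) (hM : IsCausalStrictlyCausal M) :
    (∀ v d, ∃! βδ : (ι → F) × (ι → E), IsParameterSolution G M v d βδ.1 βδ.2) ∧
    ∃ K : (ι → F) → ι → E, IsCausal K ∧ ∀ v d β δ, IsParameterSolution G M v d β δ →
      ∀ y u, IsClosedLoopResponse G K v d y u ↔ y = G (d - δ) + v ∧ u = d - δ := by
  refine ⟨existsUnique_isParameterSolution hG hM, ?_⟩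
  obtain ⟨K, hK, response_iff⟩ := exists_isCausal_isClosedLoopResponse_iff G hM
  refine ⟨K, hK, fun v d β δ hβδ y u => ⟨fun hyu => ?_, ?_⟩⟩
  · have solution_eq : (y - G 0, d - u) = (β, δ) :=
      (existsUnique_isParameterSolution hG hM v d).unique ((response_iff v d y u).1 hyu) hβδ
    have hδ : d - u = δ := congrArg Prod.snd solution_eq
    have hu : u = d - δ := by rw [← hδ, sub_sub_cancel]
    exact ⟨hu ▸ hyu.1, hu⟩
  · rintro ⟨rfl, rfl⟩
    have hβ : G (d - δ) + v - G 0 = β := by rw [hβδ.1, add_comm]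
    rwa [response_iff, hβ, sub_sub_cancel]

end ClosedLoop

/-- any causal–strictly-causal parameter `M` generates, through the unique
solution of `β = v + G(d − δ) − G(0)`, `δ = −M(β,δ)`, an achievable closed-loop map of the
strictly causal plant `G`. -/
theorem statement5 {r m : ℕ} (G : Traj m → Traj r) (M : Traj r → Traj m → Traj m)
    (hG : StrictlyCausal G) (hM : CausalSC M) :
    -- the fixed-point equations have a unique solution for every (v,d)
    (∀ (v : Traj r) (d : Traj m),
      ∃! βδ : Traj r × Traj m,
        βδ.1 = v + G (d - βδ.2) - G 0 ∧ βδ.2 = -(M βδ.1 βδ.2)) ∧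
    -- the resulting maps Ψ^u(v,d) = d − δ, Ψ^y(v,d) = G(Ψ^u(v,d)) + v are achieved by
    -- some causal controller K
    (∀ S : Traj r × Traj m → Traj r × Traj m,
      (∀ (v : Traj r) (d : Traj m),
        (S (v, d)).1 = v + G (d - (S (v, d)).2) - G 0 ∧
        (S (v, d)).2 = -(M (S (v, d)).1 (S (v, d)).2)) →
      ∃ K : Traj r → Traj m, Causal K ∧
        ∀ (v : Traj r) (d : Traj m),
          d - (S (v, d)).2 = K (G (d - (S (v, d)).2) + v) + d) := by
  obtain ⟨solution_existsUnique, K, hK, response_iff⟩ := statement5_general hG hM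
  exact ⟨solution_existsUnique, fun S hS => ⟨K, hK, fun v d =>
    ((response_iff v d _ _ (hS v d) _ _).2 ⟨rfl, rfl⟩).2⟩⟩
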